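/- Let F be a field with char F ∉ {2, 3} and let V be an F-vector space of finite dimension d ≥ 2. Let L³V denote the subspace of T³V = V ⊗ V ⊗ V spanned by the elements [[u, v], w] for u, v, w ∈ V, where [x, y] = x ⊗ y − y ⊗ x. Then L³V is an irreducible GL(V)-module: the only subspaces of L³V that are invariant under g ⊗ g ⊗ g for every g ∈ GL(V) are {0} and L³V itself. -/

import Mathlib

/-!
STATEMENT 11: Let `F` be a field with `char F ∉ {2, 3}` and let `V` be an
`F`-vector space of finite dimension `d ≥ 2`.  Let `L³V ⊆ T³V = V ⊗ V ⊗ V` be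
the span of the left-normed brackets `[[u, v], w]`.  Then `L³V` is an
irreducible `GL(V)`-module: the only subspaces of `L³V` invariant under
`g ⊗ g ⊗ g` for every `g ∈ GL(V)` are `{0}` and `L³V` itself.
-/

open TensorProduct

section Defs

variable (F : Type*) {V : Type*} [Field F] [AddCommGroup V] [Module F V]

/-- `[u, w] = u ⊗ w − w ⊗ u ∈ T²V`. -/
noncomputable def br11 (u w : V) : V ⊗[F] V :=
  u ⊗ₜ[F] w - w ⊗ₜ[F] u

/-- `[x, y] = x ⊗ y − y ⊗ x ∈ T³V` for `x ∈ T²V`, `y ∈ V`. -/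
noncomputable def br21 (x : V ⊗[F] V) (y : V) : (V ⊗[F] V) ⊗[F] V :=
  x ⊗ₜ[F] y - (TensorProduct.assoc F V V V).symm (y ⊗ₜ[F] x)

/-- The Lie power `L³V`: the subspace of `T³V` spanned by all `[[u,v],w]`. -/
noncomputable def L3 : Submodule F ((V ⊗[F] V) ⊗[F] V) :=
  Submodule.span F {x | ∃ u v w : V, x = br21 F (br11 F u v) w}

/-- The diagonal action `g ⊗ g ⊗ g` of `GL(V)` on `T³V`. -/
noncomputable def map3 (g : V →ₗ[F] V) :
    ((V ⊗[F] V) ⊗[F] V) →ₗ[F] ((V ⊗[F] V) ⊗[F] V) :=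
  TensorProduct.map (TensorProduct.map g g) g

end Defs

section Helpers

variable {F : Type*} {V : Type*} [Field F] [AddCommGroup V] [Module F V]

theorem br21_br11 (u v w : V) : br21 F (br11 F u v) w =
    (u ⊗ₜ[F] v) ⊗ₜ[F] w - (v ⊗ₜ[F] u) ⊗ₜ[F] w - (w ⊗ₜ[F] u) ⊗ₜ[F] v + (w ⊗ₜ[F] v) ⊗ₜ[F] u := by
  simp only [br21, br11, TensorProduct.sub_tmul, TensorProduct.tmul_sub, map_sub,
    TensorProduct.assoc_symm_tmul]
  abel

/-- The derivation induced on the third tensor power. -/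
noncomputable def der3 (A : V →ₗ[F] V) :
    ((V ⊗[F] V) ⊗[F] V) →ₗ[F] ((V ⊗[F] V) ⊗[F] V) :=
  TensorProduct.map (TensorProduct.map A LinearMap.id) LinearMap.id
  + TensorProduct.map (TensorProduct.map LinearMap.id A) LinearMap.id
  + TensorProduct.map (TensorProduct.map LinearMap.id LinearMap.id) A

theorem der3_tmul (A : V →ₗ[F] V) (a b c : V) : der3 A ((a ⊗ₜ[F] b) ⊗ₜ[F] c) =
    (A a ⊗ₜ[F] b) ⊗ₜ[F] c + (a ⊗ₜ[F] A b) ⊗ₜ[F] c + (a ⊗ₜ[F] b) ⊗ₜ[F] A c := by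
  simp [der3]

theorem ext3 {M : Type*} [AddCommGroup M] [Module F M]
    {f g : ((V ⊗[F] V) ⊗[F] V) →ₗ[F] M}
    (h : ∀ a b c : V, f ((a ⊗ₜ[F] b) ⊗ₜ[F] c) = g ((a ⊗ₜ[F] b) ⊗ₜ[F] c)) : f = g :=
  TensorProduct.ext_threefold h

theorem der3_smul (t : F) (A : V →ₗ[F] V) : der3 (t • A) = t • der3 A := by
  apply ext3
  intro a b c
  simp [der3_tmul, TensorProduct.smul_tmul', TensorProduct.tmul_smul]

/-- Interpolation of the linear coefficient. -/
theorem interp (A : V →ₗ[F] V) (x : (V ⊗[F] V) ⊗[F] V) :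
    (12 : F) • der3 A x = (16 : F) • (map3 F (LinearMap.id + (1 : F) • A) x - x)
      - (3 : F) • (map3 F (LinearMap.id + (2 : F) • A) x - x)
      - (map3 F (LinearMap.id + (-2 : F) • A) x - x) := by
  have : (12 : F) • der3 A = (16 : F) • (map3 F (LinearMap.id + (1 : F) • A) - LinearMap.id)
      - (3 : F) • (map3 F (LinearMap.id + (2 : F) • A) - LinearMap.id)
      - (map3 F (LinearMap.id + (-2 : F) • A) - LinearMap.id) := by
    apply ext3
    intro a b c
    simp only [LinearMap.smul_apply, LinearMap.sub_apply, der3_tmul, map3, TensorProduct.map_tmul,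
      LinearMap.add_apply, LinearMap.id_apply, TensorProduct.add_tmul, TensorProduct.tmul_add,
      ← TensorProduct.smul_tmul', TensorProduct.tmul_smul]
    module
  exact LinearMap.congr_fun this x

/-- The rank one map `x ↦ f x • u`. -/
noncomputable def rk1 (u : V) (f : V →ₗ[F] F) : V →ₗ[F] V := f.smulRight u

theorem rk1_apply (u : V) (f : V →ₗ[F] F) (x : V) : rk1 u f x = f x • u := by
  simp [rk1]

theorem rk1_comp (u v : V) (f g : V →ₗ[F] F) : rk1 u f ∘ₗ rk1 v g = f v • rk1 u g := by
  ext x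
  simp [rk1_apply, smul_smul, mul_comm]

theorem exists_equiv (u : V) (f : V →ₗ[F] F) (t : F) (h : 1 + t * f u ≠ 0) :
    ∃ g : V ≃ₗ[F] V, g.toLinearMap = LinearMap.id + t • rk1 u f := by
  refine ⟨LinearEquiv.ofLinear (LinearMap.id + t • rk1 u f)
    (LinearMap.id + (-(t / (1 + t * f u))) • rk1 u f) ?_ ?_, rfl⟩
  all_goals
    ext x
    simp only [LinearMap.comp_apply, LinearMap.add_apply, LinearMap.smul_apply, LinearMap.id_apply,
      rk1_apply, map_add, map_smul, smul_eq_mul]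
    match_scalars <;> field_simp <;> ring

theorem der3_mem (h12 : (12 : F) ≠ 0)
    (W : Submodule F ((V ⊗[F] V) ⊗[F] V))
    (hWinv : ∀ (g : V ≃ₗ[F] V), ∀ x ∈ W, map3 F g.toLinearMap x ∈ W)
    (u : V) (f : V →ₗ[F] F) (x : (V ⊗[F] V) ⊗[F] V) (hx : x ∈ W) : der3 (rk1 u f) x ∈ W := by
  have h2 : (2 : F) ≠ 0 := fun h => h12 (by linear_combination 6 * h)
  have h3 : (3 : F) ≠ 0 := fun h => h12 (by linear_combination 4 * h)
  have key : ∀ f : V →ₗ[F] F, (f u = 0 ∨ f u = 1) → der3 (rk1 u f) x ∈ W := by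
    intro f hf
    have hm : ∀ t : F, t ≠ -1 → map3 F (LinearMap.id + t • rk1 u f) x - x ∈ W := by
      intro t ht
      obtain ⟨g, hg⟩ := exists_equiv u f t (by
        rcases hf with h | h
        · simp [h]
        · rw [h]; intro h'; apply ht; linear_combination h')
      rw [← hg]
      exact W.sub_mem (hWinv g x hx) hx
    have : (12 : F) • der3 (rk1 u f) x ∈ W := by
      rw [interp]
      refine W.sub_mem (W.sub_mem (W.smul_mem _ (hm _ ?_)) (W.smul_mem _ (hm _ ?_))) (hm _ ?_)
      · intro h; apply h2; linear_combination h
      · intro h; apply h3; linear_combination h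
      · intro h; apply one_ne_zero (α := F); linear_combination -h
    exact (W.smul_mem_iff h12).1 this
  by_cases hc : f u = 0
  · exact key f (Or.inl hc)
  · have h1 := key ((f u)⁻¹ • f) (Or.inr (by simp [hc]))
    have h2 : rk1 u ((f u)⁻¹ • f) = (f u)⁻¹ • rk1 u f := by
      ext y; simp [rk1_apply, smul_smul]
    rw [h2, der3_smul, LinearMap.smul_apply] at h1
    exact (W.smul_mem_iff (inv_ne_zero hc)).1 h1

/-- Second polarized operator. -/
noncomputable def pol2 (A B : V →ₗ[F] V) :
    ((V ⊗[F] V) ⊗[F] V) →ₗ[F] ((V ⊗[F] V) ⊗[F] V) :=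
  der3 A ∘ₗ der3 B - der3 (A ∘ₗ B)

/-- Third polarized operator. -/
noncomputable def pol3 (A B C : V →ₗ[F] V) :
    ((V ⊗[F] V) ⊗[F] V) →ₗ[F] ((V ⊗[F] V) ⊗[F] V) :=
  pol2 A B ∘ₗ der3 C - pol2 (A ∘ₗ C) B - pol2 A (B ∘ₗ C)

theorem pol3_tmul (A B C : V →ₗ[F] V) (a b c : V) : pol3 A B C ((a ⊗ₜ[F] b) ⊗ₜ[F] c) =
    (A a ⊗ₜ[F] B b) ⊗ₜ[F] C c + (A a ⊗ₜ[F] C b) ⊗ₜ[F] B c + (B a ⊗ₜ[F] A b) ⊗ₜ[F] C c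
    + (B a ⊗ₜ[F] C b) ⊗ₜ[F] A c + (C a ⊗ₜ[F] A b) ⊗ₜ[F] B c + (C a ⊗ₜ[F] B b) ⊗ₜ[F] A c := by
  simp only [pol3, pol2, LinearMap.sub_apply, LinearMap.comp_apply, der3_tmul, map_add]
  abel

/-- The functional `f ⊗ g ⊗ h`. -/
noncomputable def phi (f g h : V →ₗ[F] F) : ((V ⊗[F] V) ⊗[F] V) →ₗ[F] F :=
  LinearMap.mul' F F ∘ₗ TensorProduct.map (LinearMap.mul' F F ∘ₗ TensorProduct.map f g) h

theorem phi_tmul (f g h : V →ₗ[F] F) (a b c : V) :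
    phi f g h ((a ⊗ₜ[F] b) ⊗ₜ[F] c) = f a * g b * h c := by
  simp [phi]

theorem pol3_L3 (u v w : V) (f g h : V →ₗ[F] F) (x : (V ⊗[F] V) ⊗[F] V) (hx : x ∈ L3 F (V := V)) :
    pol3 (rk1 u f) (rk1 v g) (rk1 w h) x =
      phi f g h x • br21 F (br11 F u v) w + phi f h g x • br21 F (br11 F u w) v := by
  induction hx using Submodule.span_induction with
  | mem x hx =>
    obtain ⟨a, b, c, rfl⟩ := hx
    simp only [br21_br11, map_add, map_sub, pol3_tmul, phi_tmul, rk1_apply,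
      ← TensorProduct.smul_tmul', TensorProduct.tmul_smul]
    module
  | zero => simp
  | add x y _ _ hx hy => rw [map_add, hx, hy, map_add, map_add]; module
  | smul t x _ hx => rw [map_smul, hx, map_smul, map_smul]; module

theorem exists_phi [FiniteDimensional F V] (x : (V ⊗[F] V) ⊗[F] V) (hx : x ≠ 0) :
    ∃ f g h : V →ₗ[F] F, phi f g h x ≠ 0 := by
  by_contra! hn
  apply hx
  let b := Module.finBasis F V
  apply ((b.tensorProduct b).tensorProduct b).ext_elem
  rintro ⟨⟨i, j⟩, k⟩
  have : phi (b.coord i) (b.coord j) (b.coord k) =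
      ((b.tensorProduct b).tensorProduct b).coord ((i, j), k) := by
    apply ext3
    intro a c d
    simp [phi_tmul, Module.Basis.tensorProduct_repr_tmul_apply, mul_comm, mul_left_comm]
  have h2 := LinearMap.congr_fun this x
  rw [hn] at h2
  simpa using h2.symm

end Helpers

theorem lie_power_three_irreducible
    (F V : Type*) [Field F] [AddCommGroup V] [Module F V] [FiniteDimensional F V]
    (h2 : ringChar F ≠ 2) (h3 : ringChar F ≠ 3)
    (hd : 2 ≤ Module.finrank F V)
    (W : Submodule F ((V ⊗[F] V) ⊗[F] V))
    (hWL : W ≤ L3 F (V := V))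
    (hWinv : ∀ (g : V ≃ₗ[F] V), ∀ x ∈ W, map3 F g.toLinearMap x ∈ W) :
    W = ⊥ ∨ W = L3 F (V := V) := by
  have two : (2 : F) ≠ 0 := Ring.two_ne_zero h2
  have three : (3 : F) ≠ 0 := by
    intro h
    have hd3 : ringChar F ∣ 3 := (ringChar.spec F 3).1 (by exact_mod_cast h)
    rcases (Nat.dvd_prime Nat.prime_three).1 hd3 with h1 | h1
    · have := (ringChar.spec F 1).2 (by rw [h1])
      simp at this
    · exact h3 h1
  have h12 : (12 : F) ≠ 0 := by
    have : (12 : F) = 2 * 2 * 3 := by norm_num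
    rw [this]
    exact mul_ne_zero (mul_ne_zero two two) three
  by_cases hW : W = ⊥
  · exact Or.inl hW
  right
  obtain ⟨x, hxW, hx0⟩ := W.exists_mem_ne_zero_of_ne_bot hW
  obtain ⟨f, g, h, hφ⟩ := exists_phi x hx0
  have hder := der3_mem h12 W hWinv
  have hpol : ∀ u v w : V, pol3 (rk1 u f) (rk1 v g) (rk1 w h) x ∈ W := by
    intro u v w
    simp only [pol3, pol2, LinearMap.sub_apply, LinearMap.comp_apply, rk1_comp, der3_smul,
      LinearMap.smul_apply, LinearMap.comp_smul, LinearMap.smul_comp]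
    have m := hder w h x hxW
    refine W.sub_mem (W.sub_mem (W.sub_mem ?_ ?_) (W.sub_mem ?_ ?_)) (W.sub_mem ?_ ?_)
    all_goals
      repeat' first
        | exact hxW
        | apply W.smul_mem
        | apply hder
  have hB : ∀ u v : V, br21 F (br11 F u v) u ∈ W := by
    intro u v
    have h1 := hpol u v u
    rw [pol3_L3 _ _ _ _ _ _ x (hWL hxW)] at h1
    have h0 : br21 F (br11 F u u) v = 0 := by rw [br21_br11]; abel
    rw [h0, smul_zero, add_zero] at h1
    exact (W.smul_mem_iff hφ).1 h1
  refine le_antisymm hWL (Submodule.span_le.2 ?_)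
  rintro _ ⟨u, v, w, rfl⟩
  have hlin : ∀ u v w : V, br21 F (br11 F u v) w + br21 F (br11 F w v) u ∈ W := by
    intro u v w
    have h1 := W.sub_mem (W.sub_mem (hB (u + w) v) (hB u v)) (hB w v)
    convert h1 using 1
    simp only [br21_br11, TensorProduct.add_tmul, TensorProduct.tmul_add]
    abel
  have h1 := W.add_mem (hlin u v w) (hlin v u w)
  have h3B : (3 : F) • br21 F (br11 F u v) w ∈ W := by
    have h1 := W.sub_mem (hlin u v w) (hlin v u w)
    convert h1 using 1
    simp only [br21_br11]
    module
  exact (W.smul_mem_iff three).1 h3B
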